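/- Let d ≥ 1, let T_{n-1}^d be a d-hypertree on [n-1] and T_{n-1}^{d-1} a (d-1)-hypertree on [n-1] over F_2, and let T_n^d = T_{n-1}^d ⊕ Cone_n(T_{n-1}^{d-1}), which is a d-hypertree on [n]. Then for every (d-1)-cycle Z on [n]: setting F = Fill(Link_n(Z), T_{n-1}^{d-1}) and Z' = Z ⊕ Cone_n(Link_n(Z)) ⊕ F, the set Z' is a (d-1)-cycle on [n-1] and Fill(Z, T_n^d) = Cone_n(F) ⊕ Fill(Z', T_{n-1}^d). -/

import Mathlib

open Finset symmDiff

/-- The vertex set `[n] = {1, …, n}`. -/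
def rng (n : ℕ) : Finset ℕ := Finset.Icc 1 n

/-- The set of `d`-simplices (i.e. `(d+1)`-element subsets) on the vertex set `V`. -/
def simplices (V : Finset ℕ) (d : ℕ) : Finset (Finset ℕ) :=
  V.powerset.filter fun σ => σ.card = d + 1

/-- The mod-2 boundary of a set `X` of simplices: the set of faces `τ` of codimension one
(`|τ| + 1 = |σ|`) contained in an odd number of members of `X`. -/
def bd (X : Finset (Finset ℕ)) : Finset (Finset ℕ) :=
  (X.biUnion fun σ => σ.powerset).filter
    fun τ => Odd (X.filter fun σ => τ ⊆ σ ∧ τ.card + 1 = σ.card).card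

/-- A set of simplices is acyclic (a forest) over `F_2` if no nonempty subset has
empty boundary. -/
def IsAcyclic (F : Finset (Finset ℕ)) : Prop :=
  ∀ Y ⊆ F, Y ≠ ∅ → bd Y ≠ ∅

/-- A `d`-hypertree on `V`: a maximal acyclic set of `d`-simplices on `V`. -/
def IsHypertreeOn (V : Finset ℕ) (d : ℕ) (T : Finset (Finset ℕ)) : Prop :=
  T ⊆ simplices V d ∧ IsAcyclic T ∧
    ∀ G, T ⊆ G → G ⊆ simplices V d → IsAcyclic G → G = T

/-- A simple cycle over `F_2`: a nonempty set with empty boundary, no nonempty proper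
subset of which has empty boundary. -/
def IsSimpleCycle (Z : Finset (Finset ℕ)) : Prop :=
  Z ≠ ∅ ∧ bd Z = ∅ ∧ ∀ Y ⊂ Z, Y ≠ ∅ → bd Y ≠ ∅

/-- Collapsibility: `X` can be reduced to `∅` by repeatedly removing a simplex `σ ∈ X`
containing a codimension-one face contained in no other current member of `X`. -/
inductive Collapsible : Finset (Finset ℕ) → Prop
  | empty : Collapsible ∅
  | step (X : Finset (Finset ℕ)) (σ τ : Finset ℕ) (hσ : σ ∈ X) (hτ : τ ⊆ σ)
      (hcard : τ.card + 1 = σ.card) (huniq : ∀ σ' ∈ X, τ ⊆ σ' → σ' = σ)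
      (h : Collapsible (X.erase σ)) : Collapsible X

/-- The cone over `X` with apex `v`. -/
def cone (v : ℕ) (X : Finset (Finset ℕ)) : Finset (Finset ℕ) :=
  X.image (insert v)

/-- The link of the vertex `v` in `X`. -/
def link (v : ℕ) (X : Finset (Finset ℕ)) : Finset (Finset ℕ) :=
  (X.filter fun σ => v ∈ σ).image fun σ => σ.erase v

/-- `fill Z T`: the subset `F ⊆ T` with `∂F = Z` (when it exists; it is unique when `T`
is a hypertree and `Z` a cycle). -/
noncomputable def fill (Z T : Finset (Finset ℕ)) : Finset (Finset ℕ) :=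
  if h : ∃ F, F ⊆ T ∧ bd F = Z then h.choose else ∅

/-- The average filling-volume `μ(T)` of a `d`-hypertree `T` on `[n]`. -/
noncomputable def fillVolAvg (n d : ℕ) (T : Finset (Finset ℕ)) : ℝ :=
  (∑ σ ∈ simplices (rng n) d, ((fill (bd {σ}) T).card : ℝ)) / (n.choose (d + 1) : ℝ)

open Classical in
/-- The cut of `τ` in `T`: the set of `d`-simplices `σ` on `[n]` such that
`T ⊕ {τ} ⊕ {σ}` is a `d`-hypertree on `[n]`. -/
noncomputable def cut (n d : ℕ) (τ : Finset ℕ) (T : Finset (Finset ℕ)) : Finset (Finset ℕ) :=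
  (simplices (rng n) d).filter fun σ => IsHypertreeOn (rng n) d ((T ∆ {τ}) ∆ {σ})

def Avoids (v : ℕ) (X : Finset (Finset ℕ)) : Prop := ∀ σ ∈ X, v ∉ σ

lemma mem_bd {X : Finset (Finset ℕ)} {τ : Finset ℕ} :
    τ ∈ bd X ↔ Odd (X.filter fun σ => τ ⊆ σ ∧ τ.card + 1 = σ.card).card := by
  unfold bd
  rw [Finset.mem_filter]
  refine ⟨fun h => h.2, fun h => ⟨?_, h⟩⟩
  obtain ⟨σ, hσ⟩ := Finset.card_pos.mp h.pos
  rw [Finset.mem_filter] at hσ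
  rw [Finset.mem_biUnion]
  exact ⟨σ, hσ.1, Finset.mem_powerset.mpr hσ.2.1⟩

lemma odd_card_symmDiff {α : Type*} [DecidableEq α] (A B : Finset α) :
    Odd (A ∆ B).card ↔ ¬ (Odd A.card ↔ Odd B.card) := by
  have h1 : (A ∆ B).card = (A \ B).card + (B \ A).card := by
    rw [← Finset.card_union_of_disjoint disjoint_sdiff_sdiff]; rfl
  have h2 := Finset.card_sdiff_add_card_inter A B
  have h3 := Finset.card_sdiff_add_card_inter B A
  rw [Finset.inter_comm] at h3
  simp only [Nat.odd_iff]
  omega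

lemma bd_symmDiff (X Y : Finset (Finset ℕ)) : bd (X ∆ Y) = bd X ∆ bd Y := by
  ext τ
  rw [Finset.mem_symmDiff, mem_bd, mem_bd, mem_bd]
  have : ((X ∆ Y).filter fun σ => τ ⊆ σ ∧ τ.card + 1 = σ.card) =
      (X.filter fun σ => τ ⊆ σ ∧ τ.card + 1 = σ.card) ∆
      (Y.filter fun σ => τ ⊆ σ ∧ τ.card + 1 = σ.card) := by
    ext σ; simp only [Finset.mem_filter, Finset.mem_symmDiff]; tauto
  rw [this, odd_card_symmDiff]; tauto

lemma bd_empty : bd ∅ = ∅ := rfl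

lemma avoids_bd {v : ℕ} {X : Finset (Finset ℕ)} (h : Avoids v X) : Avoids v (bd X) := by
  intro τ hτ hv
  rw [mem_bd] at hτ
  obtain ⟨σ, hσ⟩ := Finset.card_pos.mp hτ.pos
  rw [Finset.mem_filter] at hσ
  exact h σ hσ.1 (hσ.2.1 hv)

lemma avoids_symmDiff {v : ℕ} {X Y : Finset (Finset ℕ)} (h : Avoids v X) (h' : Avoids v Y) :
    Avoids v (X ∆ Y) := by
  intro σ hσ
  rw [Finset.mem_symmDiff] at hσ
  rcases hσ with hσ | hσ
  · exact h σ hσ.1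
  · exact h' σ hσ.1

lemma mem_cone_iff {v : ℕ} {X : Finset (Finset ℕ)} (h : Avoids v X) {τ : Finset ℕ} :
    τ ∈ cone v X ↔ v ∈ τ ∧ τ.erase v ∈ X := by
  unfold cone
  rw [Finset.mem_image]
  constructor
  · rintro ⟨σ, hσ, rfl⟩
    refine ⟨Finset.mem_insert_self _ _, ?_⟩
    rwa [Finset.erase_insert (h σ hσ)]
  · rintro ⟨h1, h2⟩
    exact ⟨_, h2, Finset.insert_erase h1⟩

lemma bd_cone {v : ℕ} {X : Finset (Finset ℕ)} (h : Avoids v X) :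
    bd (cone v X) = X ∆ cone v (bd X) := by
  ext τ
  rw [Finset.mem_symmDiff, mem_cone_iff (avoids_bd h), mem_bd, mem_bd]
  by_cases hv : v ∈ τ
  · have hX : τ ∉ X := fun hτ => h τ hτ hv
    have : ((cone v X).filter fun σ => τ ⊆ σ ∧ τ.card + 1 = σ.card) =
        (X.filter fun σ => τ.erase v ⊆ σ ∧ (τ.erase v).card + 1 = σ.card).image (insert v) := by
      ext σ
      simp only [cone, Finset.mem_filter, Finset.mem_image]
      have hc := Finset.card_erase_add_one hv
      constructor
      · rintro ⟨⟨ρ, hρ, rfl⟩, h1, h2⟩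
        rw [Finset.card_insert_of_notMem (h ρ hρ)] at h2
        exact ⟨ρ, ⟨hρ, by rwa [← Finset.subset_insert_iff], by omega⟩, rfl⟩
      · rintro ⟨ρ, ⟨hρ, h1, h2⟩, rfl⟩
        rw [Finset.card_insert_of_notMem (h ρ hρ)]
        exact ⟨⟨ρ, hρ, rfl⟩, by rwa [Finset.subset_insert_iff], by omega⟩
    rw [this, Finset.card_image_of_injOn]
    · simp [hX, hv]
    · intro a ha b hb hab
      simp only [Finset.coe_filter, Set.mem_ofPred_eq] at ha hb
      have := congrArg (fun s => Finset.erase s v) hab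
      simpa [Finset.erase_insert (h a ha.1), Finset.erase_insert (h b hb.1)] using this
  · have : ((cone v X).filter fun σ => τ ⊆ σ ∧ τ.card + 1 = σ.card) =
        (X.filter fun σ => σ = τ).image (insert v) := by
      ext σ
      simp only [cone, Finset.mem_filter, Finset.mem_image]
      constructor
      · rintro ⟨⟨ρ, hρ, rfl⟩, h1, h2⟩
        rw [Finset.card_insert_of_notMem (h ρ hρ)] at h2
        rw [Finset.subset_insert_iff_of_notMem hv] at h1
        exact ⟨ρ, ⟨hρ, (Finset.eq_of_subset_of_card_le h1 (by omega)).symm⟩, rfl⟩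
      · rintro ⟨ρ, ⟨hρ, rfl⟩, rfl⟩
        rw [Finset.card_insert_of_notMem (h ρ hρ)]
        exact ⟨⟨ρ, hρ, rfl⟩, Finset.subset_insert _ _, rfl⟩
    rw [this, Finset.filter_eq']
    by_cases hX : τ ∈ X <;> simp [hX, hv]

lemma split_zero {v : ℕ} {A B : Finset (Finset ℕ)} (hA : Avoids v A) (hB : Avoids v B)
    (h : A ∆ cone v B = ∅) : A = ∅ ∧ B = ∅ := by
  have h1 : A = cone v B := symmDiff_eq_bot.mp h
  have h2 : A = ∅ := by
    rw [Finset.eq_empty_iff_forall_notMem]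
    intro σ hσ
    have := hA σ hσ
    rw [h1, mem_cone_iff hB] at hσ
    exact this hσ.1
  refine ⟨h2, ?_⟩
  rw [h2] at h1
  exact Finset.image_eq_empty.mp h1.symm

lemma exists_fill_single {V : Finset ℕ} {d : ℕ} {T : Finset (Finset ℕ)}
    (hT : IsHypertreeOn V d T) {σ : Finset ℕ} (hσ : σ ∈ simplices V d) :
    ∃ G ⊆ T, bd G = bd {σ} := by
  by_cases hm : σ ∈ T
  · exact ⟨{σ}, by simpa using hm, rfl⟩
  have hn : ¬ IsAcyclic (insert σ T) := by
    intro ha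
    have := hT.2.2 _ (Finset.subset_insert σ T) (Finset.insert_subset hσ hT.1) ha
    exact hm (this ▸ Finset.mem_insert_self σ T)
  unfold IsAcyclic at hn
  push Not at hn
  obtain ⟨Y, hY, hne, hb⟩ := hn
  have hσY : σ ∈ Y := by
    by_contra hc
    exact hT.2.1 Y ((Finset.subset_insert_iff_of_notMem hc).mp hY) hne.ne_empty hb
  refine ⟨Y ∆ {σ}, ?_, ?_⟩
  · intro ρ hρ
    rw [Finset.mem_symmDiff, Finset.mem_singleton] at hρ
    rcases hρ with ⟨h1, h2⟩ | ⟨h1, h2⟩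
    · exact Finset.mem_of_mem_insert_of_ne (hY h1) h2
    · exact absurd (h1 ▸ hσY) h2
  · rw [bd_symmDiff, hb]; exact bot_symmDiff _

lemma symmDiff_sub {A B C : Finset (Finset ℕ)} (hA : A ⊆ C) (hB : B ⊆ C) : A ∆ B ⊆ C := by
  intro x hx
  rw [Finset.mem_symmDiff] at hx
  rcases hx with hx | hx
  · exact hA hx.1
  · exact hB hx.1

lemma exists_fill {V : Finset ℕ} {d : ℕ} {T : Finset (Finset ℕ)}
    (hT : IsHypertreeOn V d T) (X : Finset (Finset ℕ)) (hX : X ⊆ simplices V d) :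
    ∃ G ⊆ T, bd G = bd X := by
  induction X using Finset.induction_on with
  | empty => exact ⟨∅, by simp, rfl⟩
  | insert σ X hs ih =>
    rw [Finset.insert_subset_iff] at hX
    obtain ⟨G, hG, hb⟩ := ih hX.2
    obtain ⟨G', hG', hb'⟩ := exists_fill_single hT hX.1
    refine ⟨G' ∆ G, symmDiff_sub hG' hG, ?_⟩
    have : insert σ X = {σ} ∆ X := by
      ext ρ
      simp only [Finset.mem_insert, Finset.mem_symmDiff, Finset.mem_singleton]
      constructor
      · rintro (rfl | h)
        · exact Or.inl ⟨rfl, hs⟩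
        · exact Or.inr ⟨h, fun e => hs (e ▸ h)⟩
      · tauto
    rw [this, bd_symmDiff, bd_symmDiff, hb, hb']

lemma fill_spec {Z T : Finset (Finset ℕ)} (h : ∃ F, F ⊆ T ∧ bd F = Z) :
    fill Z T ⊆ T ∧ bd (fill Z T) = Z := by
  unfold fill
  rw [dif_pos h]
  exact h.choose_spec

lemma fill_unique {Z T G : Finset (Finset ℕ)} (hT : IsAcyclic T) (hG : G ⊆ T) (hb : bd G = Z) :
    fill Z T = G := by
  obtain ⟨h1, h2⟩ := fill_spec ⟨G, hG, hb⟩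
  by_contra hne
  refine hT (fill Z T ∆ G) (symmDiff_sub h1 hG) (fun h => hne (symmDiff_eq_bot.mp h)) ?_
  rw [bd_symmDiff, h2, hb]; exact symmDiff_self _

lemma avoids_link (v : ℕ) (X : Finset (Finset ℕ)) : Avoids v (link v X) := by
  intro σ hσ
  unfold link at hσ
  rw [Finset.mem_image] at hσ
  obtain ⟨ρ, _, rfl⟩ := hσ
  exact Finset.notMem_erase _ _

lemma cone_link (v : ℕ) (X : Finset (Finset ℕ)) :
    cone v (link v X) = X.filter fun σ => v ∈ σ := by
  ext σ
  rw [mem_cone_iff (avoids_link v X)]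
  simp only [link, Finset.mem_image, Finset.mem_filter]
  constructor
  · rintro ⟨h, ρ, ⟨h1, h2⟩, h3⟩
    have : ρ = σ := by rw [← Finset.insert_erase h2, h3, Finset.insert_erase h]
    exact this ▸ ⟨h1, h2⟩
  · rintro ⟨h1, h2⟩
    exact ⟨h2, σ, ⟨h1, h2⟩, rfl⟩

lemma remove_star (v : ℕ) (X : Finset (Finset ℕ)) :
    X ∆ cone v (link v X) = X.filter fun σ => v ∉ σ := by
  rw [cone_link]
  ext σ
  simp only [Finset.mem_symmDiff, Finset.mem_filter]
  tauto

lemma cone_symmDiff {v : ℕ} {X Y : Finset (Finset ℕ)} (h : Avoids v X) (h' : Avoids v Y) :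
    cone v (X ∆ Y) = cone v X ∆ cone v Y := by
  ext σ
  rw [mem_cone_iff (avoids_symmDiff h h'), Finset.mem_symmDiff, Finset.mem_symmDiff,
    mem_cone_iff h, mem_cone_iff h']
  tauto

lemma avoids_rng {n d : ℕ} {X : Finset (Finset ℕ)} (h : X ⊆ simplices (rng (n - 1)) d) :
    Avoids n X := by
  intro σ hσ hn
  have := h hσ
  simp only [simplices, Finset.mem_filter, Finset.mem_powerset] at this
  have := this.1 hn
  simp only [rng, Finset.mem_Icc] at this
  omega

lemma sub_rng {n d : ℕ} {X : Finset (Finset ℕ)} (h : X ⊆ simplices (rng n) d)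
    (hv : Avoids n X) : X ⊆ simplices (rng (n - 1)) d := by
  intro σ hσ
  have h1 := h hσ
  simp only [simplices, Finset.mem_filter, Finset.mem_powerset] at h1 ⊢
  refine ⟨fun x hx => ?_, h1.2⟩
  have := h1.1 hx
  simp only [rng, Finset.mem_Icc] at this ⊢
  have : x ≠ n := fun e => hv σ hσ (e ▸ hx)
  omega

lemma acyclic_ext {v : ℕ} {A B : Finset (Finset ℕ)} (hA : Avoids v A) (hB : Avoids v B)
    (hA' : IsAcyclic A) (hB' : IsAcyclic B) : IsAcyclic (A ∆ cone v B) := by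
  intro Y hY hne hb
  have hR : (Y.filter fun σ => v ∉ σ) ⊆ A := by
    intro σ hσ
    rw [Finset.mem_filter] at hσ
    have := hY hσ.1
    rw [Finset.mem_symmDiff, mem_cone_iff hB] at this
    tauto
  have hL : link v Y ⊆ B := by
    intro σ hσ
    unfold link at hσ
    rw [Finset.mem_image] at hσ
    obtain ⟨ρ, hρ, rfl⟩ := hσ
    rw [Finset.mem_filter] at hρ
    have h1 := hY hρ.1
    rw [Finset.mem_symmDiff, mem_cone_iff hB] at h1
    rcases h1 with h1 | h1
    · exact absurd hρ.2 (hA ρ h1.1)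
    · exact h1.1.2
  have hYe : Y = (Y.filter fun σ => v ∉ σ) ∆ cone v (link v Y) := by
    rw [← remove_star, symmDiff_symmDiff_cancel_right]
  have hRv : Avoids v (Y.filter fun σ => v ∉ σ) := fun σ hσ => (Finset.mem_filter.mp hσ).2
  have hLv := avoids_link v Y
  generalize (Y.filter fun σ => v ∉ σ) = R at *
  generalize link v Y = L at *
  rw [hYe, bd_symmDiff, bd_cone hLv, ← symmDiff_assoc] at hb
  obtain ⟨h1, h2⟩ := split_zero (avoids_symmDiff (avoids_bd hRv) hLv) (avoids_bd hLv) hb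
  have hL0 : L = ∅ := by
    by_contra hc; exact hB' L hL hc h2
  subst hL0
  have h3 : bd R = ∅ := symmDiff_eq_bot.mp h1
  have hR0 : R = ∅ := by
    by_contra hc; exact hA' R hR hc h3
  subst hR0
  exact hne hYe

/-- Every cycle on a vertex set is the boundary of a chain. -/
lemma cycle_is_bd {V : Finset ℕ} {d : ℕ} {X : Finset (Finset ℕ)}
    (hX : X ⊆ simplices V d) (hb : bd X = ∅) : ∃ Y ⊆ simplices V (d + 1), bd Y = X := by
  rcases V.eq_empty_or_nonempty with rfl | ⟨v, hv⟩
  · refine ⟨∅, by simp, ?_⟩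
    rw [bd_empty, eq_comm, Finset.eq_empty_iff_forall_notMem]
    intro σ hσ
    have := hX hσ
    simp only [simplices, Finset.mem_filter, Finset.mem_powerset, Finset.subset_empty] at this
    obtain ⟨rfl, h⟩ := this
    simp at h
  · have hRv : Avoids v (X.filter fun σ => v ∉ σ) := fun σ hσ => (Finset.mem_filter.mp hσ).2
    have hXe : X = (X.filter fun σ => v ∉ σ) ∆ cone v (link v X) := by
      rw [← remove_star, symmDiff_symmDiff_cancel_right]
    have hRX : (X.filter fun σ => v ∉ σ) ⊆ X := Finset.filter_subset _ _
    have hLv := avoids_link v X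
    generalize (X.filter fun σ => v ∉ σ) = R at *
    generalize link v X = L at *
    rw [hXe, bd_symmDiff, bd_cone hLv, ← symmDiff_assoc] at hb
    obtain ⟨h1, _⟩ := split_zero (avoids_symmDiff (avoids_bd hRv) hLv) (avoids_bd hLv) hb
    refine ⟨cone v R, ?_, ?_⟩
    · intro σ hσ
      unfold cone at hσ
      rw [Finset.mem_image] at hσ
      obtain ⟨ρ, hρ, rfl⟩ := hσ
      have h2 := hX (hRX hρ)
      simp only [simplices, Finset.mem_filter, Finset.mem_powerset] at h2 ⊢
      rw [Finset.card_insert_of_notMem (hRv ρ hρ)]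
      exact ⟨Finset.insert_subset hv h2.1, by omega⟩
    · rw [bd_cone hRv, symmDiff_eq_bot.mp h1]; exact hXe.symm

/-- Fillings and conical extensions: if `T_{n-1}^d` is a `d`-hypertree and
`T_{n-1}^{d-1}` a `(d-1)`-hypertree, both on `[n-1]`, and
`T_n^d = T_{n-1}^d ⊕ Cone_n(T_{n-1}^{d-1})`, then for every `(d-1)`-cycle `Z` on `[n]`,
with `F = Fill(Link_n Z, T_{n-1}^{d-1})` and `Z' = Z ⊕ Cone_n(Link_n Z) ⊕ F`, the set
`Z'` is a `(d-1)`-cycle on `[n-1]` and `Fill(Z, T_n^d) = Cone_n(F) ⊕ Fill(Z', T_{n-1}^d)`. -/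
theorem fill_conical_extension (d n : ℕ) (hd : 1 ≤ d)
    (Td Td1 : Finset (Finset ℕ))
    (hTd : IsHypertreeOn (rng (n - 1)) d Td)
    (hTd1 : IsHypertreeOn (rng (n - 1)) (d - 1) Td1)
    (Z : Finset (Finset ℕ)) (hZ : Z ⊆ simplices (rng n) (d - 1)) (hZcyc : bd Z = ∅)
    (F Z' : Finset (Finset ℕ)) (hF : F = fill (link n Z) Td1)
    (hZ' : Z' = (Z ∆ cone n (link n Z)) ∆ F) :
    Z' ⊆ simplices (rng (n - 1)) (d - 1) ∧ bd Z' = ∅ ∧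
      fill Z (Td ∆ cone n Td1) = cone n F ∆ fill Z' Td := by
  have hRv : Avoids n (Z.filter fun σ => n ∉ σ) := fun σ hσ => (Finset.mem_filter.mp hσ).2
  have hZe : Z = (Z.filter fun σ => n ∉ σ) ∆ cone n (link n Z) := by
    rw [← remove_star, symmDiff_symmDiff_cancel_right]
  have hRZ : (Z.filter fun σ => n ∉ σ) ⊆ Z := Finset.filter_subset _ _
  have hLv := avoids_link n Z
  rw [remove_star] at hZ'
  generalize (Z.filter fun σ => n ∉ σ) = R at *
  generalize link n Z = L at *
  have hRs := sub_rng (hRZ.trans hZ) hRv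
  have hb := hZcyc
  rw [hZe, bd_symmDiff, bd_cone hLv, ← symmDiff_assoc] at hb
  obtain ⟨h1, _⟩ := split_zero (avoids_symmDiff (avoids_bd hRv) hLv) (avoids_bd hLv) hb
  have hRL : bd R = L := symmDiff_eq_bot.mp h1
  obtain ⟨G, hG, hGb⟩ := exists_fill hTd1 R hRs
  obtain ⟨hFT, hFb⟩ := fill_spec (Z := L) ⟨G, hG, hGb.trans hRL⟩
  rw [← hF] at hFT hFb
  have hZs : Z' ⊆ simplices (rng (n - 1)) (d - 1) := by
    rw [hZ']; exact symmDiff_sub hRs (hFT.trans hTd1.1)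
  have hZb : bd Z' = ∅ := by
    rw [hZ', bd_symmDiff, hRL, hFb]; exact symmDiff_self _
  refine ⟨hZs, hZb, ?_⟩
  obtain ⟨Y, hY, hYb⟩ := cycle_is_bd hZs hZb
  rw [Nat.sub_add_cancel hd] at hY
  obtain ⟨G', hG', hGb'⟩ := exists_fill hTd Y hY
  obtain ⟨hPT, hPb⟩ := fill_spec (Z := Z') ⟨G', hG', hGb'.trans hYb⟩
  generalize fill Z' Td = P at *
  have hTv := avoids_rng hTd.1
  have hTv1 := avoids_rng hTd1.1
  have hFv : Avoids n F := fun σ hσ => hTv1 σ (hFT hσ)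
  refine fill_unique (acyclic_ext hTv hTv1 hTd.2.1 hTd1.2.1) (symmDiff_sub ?_ ?_) ?_
  · intro σ hσ
    rw [mem_cone_iff hFv] at hσ
    rw [Finset.mem_symmDiff, mem_cone_iff hTv1]
    exact Or.inr ⟨⟨hσ.1, hFT hσ.2⟩, fun h => hTv σ h hσ.1⟩
  · intro σ hσ
    rw [Finset.mem_symmDiff, mem_cone_iff hTv1]
    exact Or.inl ⟨hPT hσ, fun h => hTv σ (hPT hσ) h.1⟩
  · rw [bd_symmDiff, bd_cone hFv, hFb, hPb, hZ']
    conv_rhs => rw [hZe]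
    rw [symmDiff_comm R F, symmDiff_comm F (cone n L), symmDiff_assoc,
      symmDiff_symmDiff_cancel_left, symmDiff_comm]
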